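/- arXiv:math/0011106 — 6 statements merged into one kernel-verified Lean document; each statement's English description precedes it below -/
import Mathlib

section
/- The forgetful functor from the category Cat of small categories to the category Quiv of quivers is monadic: it has a left adjoint (the free category functor), and the comparison functor from Cat to the Eilenberg–Moore category of algebras of the induced monad on Quiv is an equivalence of categories. -/
/-!
The comparison functor is shown to be faithful, full and essentially surjective.

Write `T` for the monad on `Quiv` sending a quiver to the quiver of its paths. An algebra of `T`
is a quiver `V` with an operation `m` sending each path `X → ⋯ → Y` to an arrow `X ⟶ Y`; the unit
law says that `m` is the identity on paths of length one (and forces `m` to be the identity on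
vertices), and associativity says that a path of paths may be multiplied out in either order.

* Full: a morphism of algebras between two categories commutes with the composition of paths.
  Paths of length zero and two give preservation of identities and of binary composition.
* Essentially surjective: an algebra becomes a category with identities `m nil` and composition
  `f ≫ g = m (f, g)` (`PathAlgebra.toCategory`). By induction, composing a path in this
  category gives back `m` (`PathAlgebra.composePath_eq`), so the comparison functor sends this
  category to the given algebra, up to the identity prefunctor.
-/

open CategoryTheory

universe u

/-- A multiplication of paths on a quiver: an algebra for the path monad on `Quiv` whose action on
vertices is the identity on the nose. The law `mul_paths` is associativity of the algebra, for a
path of paths. -/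
structure PathAlgebra (V : Type u) [Quiver.{u} V] where
  /-- The product of a path. -/
  m : ∀ {X Y : V}, Quiver.Path X Y → (X ⟶ Y)
  m_toPath : ∀ {X Y : V} (f : X ⟶ Y), m f.toPath = f
  mul_paths : ∀ {X Y : Paths V} (p : Quiver.Path X Y),
    m (composePath p : X ⟶ Y) =
      m (Prefunctor.mapPath (V := Paths V) (W := V) ⟨fun X => X, fun f => m f⟩ p)

namespace PathAlgebra

variable {V : Type u} [Quiver.{u} V] (A : PathAlgebra V)

/-- The instance of `mul_paths` for a path of two paths. -/
lemma m_comp {X Y Z : V} (p : Quiver.Path X Y) (q : Quiver.Path Y Z) :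
    A.m (p.comp q) = A.m ((A.m p).toPath.comp (A.m q).toPath) := by
  have h := A.mul_paths (X := X) (Y := Z)
    ((Quiver.Path.nil.cons (show Quiver.Hom (V := Paths V) X Y from p)).cons
      (show Quiver.Hom (V := Paths V) Y Z from q))
  have e : (composePath ((Quiver.Path.nil.cons (show Quiver.Hom (V := Paths V) X Y from p)).cons
      (show Quiver.Hom (V := Paths V) Y Z from q)) : Quiver.Path X Z) = p.comp q :=
    congrArg (fun r : Quiver.Path X Y => r.comp q) (Quiver.Path.nil_comp p)
  exact (congrArg A.m e).symm.trans h

/-- The category structure determined by a multiplication of paths. -/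
@[reducible]
def toCategory : Category.{u} V where
  Hom X Y := X ⟶ Y
  id X := A.m (Quiver.Path.nil : Quiver.Path X X)
  comp f g := A.m (f.toPath.comp g.toPath)
  id_comp {X Y} f := by
    have h := A.m_comp (Quiver.Path.nil : Quiver.Path X X) f.toPath
    rw [A.m_toPath, Quiver.Path.nil_comp, A.m_toPath] at h
    exact h.symm
  comp_id {X Y} f := by
    have h := A.m_comp f.toPath (Quiver.Path.nil : Quiver.Path Y Y)
    rw [A.m_toPath, Quiver.Path.comp_nil, A.m_toPath] at h
    exact h.symm
  assoc {W X Y Z} f g h := by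
    -- both sides are the product of the path `f, g, h`
    have h₁ := A.m_comp (f.toPath.comp g.toPath) h.toPath
    have h₂ := A.m_comp f.toPath (g.toPath.comp h.toPath)
    rw [A.m_toPath] at h₁ h₂
    rw [Quiver.Path.comp_assoc] at h₁
    exact h₁.symm.trans h₂

lemma composePath_eq {X Y : V} (p : Quiver.Path X Y) :
    @composePath V A.toCategory X Y p = A.m p := by
  induction p with
  | nil => rfl
  | cons p e ih =>
    have h := A.m_comp p e.toPath
    rw [A.m_toPath] at h
    refine Eq.trans ?_ h.symm
    exact congrArg (fun r => A.m ((Quiver.Hom.toPath r).comp e.toPath)) ih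

end PathAlgebra

lemma prefunctor_map_eq {V W : Type*} [Quiver V] [Quiver W] {o : V → W}
    {m m' : ∀ {X Y : V}, (X ⟶ Y) → (o X ⟶ o Y)}
    (h : (⟨o, m⟩ : V ⥤q W) = ⟨o, m'⟩) {X Y : V} (f : X ⟶ Y) : m f = m' f := by
  injection h with _ h
  exact congrFun (congrFun (congrFun h X) Y) f

instance : Quiv.forget.{u, u}.Faithful where
  map_injective {C D} F G h := by
    apply Cat.ext
    obtain ⟨F⟩ := F
    obtain ⟨G⟩ := G
    cases F
    cases G
    cases h
    rfl

/-- A prefunctor between categories that commutes with the composition of paths is a functor. -/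
def functorOfPrefunctor {C D : Type u} [Category.{u} C] [Category.{u} D] (F : C ⥤q D)
    (h : ∀ {X Y : C} (p : Quiver.Path X Y), composePath (F.mapPath p) = F.map (composePath p)) :
    C ⥤ D where
  obj := F.obj
  map := F.map
  map_id X := (h (Quiver.Path.nil : Quiver.Path X X)).symm
  map_comp a b := by simpa using (h (a.toPath.cons b)).symm

instance : (Monad.comparison Quiv.adj.{u, u}).Full where
  map_surjective {C D} φ :=
    ⟨Functor.toCatHom (functorOfPrefunctor (C := C) (D := D) φ.f fun p =>
      prefunctor_map_eq (V := Paths C) (W := D) (o := φ.f.obj) φ.h p), rfl⟩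

instance : (Monad.comparison Quiv.adj.{u, u}).EssSurj where
  mem_essImage := by
    rintro ⟨⟨V, _⟩, ⟨o, m⟩, hu, ha⟩
    have ho : o = fun X => X := congrArg Prefunctor.obj hu
    subst ho
    let A : PathAlgebra V :=
      { m := m
        m_toPath := fun f => prefunctor_map_eq (V := V) (W := V) (o := fun X => X) hu f
        mul_paths := fun p =>
          prefunctor_map_eq (V := Paths (Paths V)) (W := V) (o := fun X => X) ha p }
    refine ⟨@Cat.of V A.toCategory, ⟨Monad.Algebra.isoMk (Iso.refl _) ?_⟩⟩
    refine (congrArg (· ≫ _) (Quiv.adj.toMonad.map_id _)).trans ?_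
    refine Prefunctor.ext (V := Paths V) (W := V) (fun X => rfl) fun X Y p => ?_
    exact (A.composePath_eq p).symm

/-- The forgetful functor `Cat ⥤ Quiv` is monadic: it has a left
adjoint (the free category functor, witnessed by the adjunction `Quiv.adj`),
and the comparison functor from `Cat` to the Eilenberg–Moore category of the
induced monad on `Quiv` is an equivalence of categories. -/
theorem forget_cat_to_quiv_monadic :
    Nonempty (MonadicRightAdjoint Quiv.forget.{u, u}) ∧
    (Monad.comparison Quiv.adj.{u, u}).IsEquivalence := by
  have h : (Monad.comparison Quiv.adj.{u, u}).IsEquivalence := { }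
  exact ⟨⟨{ L := Cat.free, adj := Quiv.adj, eqv := h }⟩, h⟩
end

section
/- The free category monad on quivers is cartesian: for the monad fc on Quiv induced by the adjunction between the free category functor and the forgetful functor Cat ⥤ Quiv, the underlying endofunctor preserves pullbacks, and every naturality square of the unit and every naturality square of the multiplication of fc is a pullback square in Quiv. -/
/-!
A square of quivers is a pullback exactly when it is one on vertices and on arrows
(`IsElementwisePullback`): one direction constructs the lift elementwise, the other tests the
universal property on the quivers `•` and `• ⟶ •`. The monad `fc` does not change vertices, and
its arrows are paths, so each claim becomes a statement about lifting paths.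

* Preservation of pullbacks: a pair of paths with the same image has pairwise compatible arrows
  and intermediate vertices, hence comes from a unique path in the pullback
  (`path_exists`, `path_unique`).
* Unit: prefunctors preserve the length of paths, so a path with image a single arrow is a single
  arrow.
* Multiplication: an arrow of `fc (fc X)` is a path with a subdivision into consecutive segments.
  A subdivision of the image of a path lifts to the path (`mult_exists`), uniquely because it is
  determined by the lengths of the segments (`mult_unique`).
-/

open CategoryTheory CategoryTheory.Limits

universe u

namespace FreeCategoryMonad

open Quiver

/-! ### Elementwise criterion for pullbacks of quivers -/

section Criterion

variable {P A B C : Type u} [Quiver.{u} P] [Quiver.{u} A] [Quiver.{u} B] [Quiver.{u} C]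

/-- The elementwise form of a pullback square of quivers: the square commutes, and vertices (resp.
arrows) of `P` correspond bijectively to pairs of vertices (resp. arrows) of `A` and `B` with the
same image in `C`. The arrow conditions fix the endpoints in `P`; as these are determined by their
projections, this is no restriction, and `≍` is needed only because `f.obj (fst.obj p)` and
`g.obj (snd.obj p)` are equal merely propositionally. -/
structure IsElementwisePullback (fst : P ⥤q A) (snd : P ⥤q B) (f : A ⥤q C) (g : B ⥤q C) :
    Prop where
  comm : fst ⋙q f = snd ⋙q g
  obj_exists : ∀ a b, f.obj a = g.obj b → ∃ p, fst.obj p = a ∧ snd.obj p = b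
  obj_unique : ∀ p q, fst.obj p = fst.obj q → snd.obj p = snd.obj q → p = q
  map_exists : ∀ (p q : P) (d : fst.obj p ⟶ fst.obj q) (e : snd.obj p ⟶ snd.obj q),
    f.map d ≍ g.map e → ∃ x : p ⟶ q, fst.map x = d ∧ snd.map x = e
  map_unique : ∀ (p q : P) (x y : p ⟶ q), fst.map x = fst.map y → snd.map x = snd.map y → x = y

theorem prefunctor_hext {F G : A ⥤q B} (hobj : ∀ a, F.obj a = G.obj a)
    (hmap : ∀ (a b : A) (e : a ⟶ b), F.map e ≍ G.map e) : F = G := by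
  obtain ⟨Fobj, Fmap⟩ := F
  obtain ⟨Gobj, Gmap⟩ := G
  obtain rfl : Fobj = Gobj := funext hobj
  congr
  funext a b e
  exact eq_of_heq (hmap a b e)

theorem map_heq_of_eq {F G : A ⥤q B} (h : F = G) {a b : A} (e : a ⟶ b) :
    F.map e ≍ G.map e := by
  subst h
  rfl

variable {fst : P ⥤q A} {snd : P ⥤q B} {f : A ⥤q C} {g : B ⥤q C}

/-- `map_exists` for arrows whose endpoints are only propositionally the projections of vertices
of `P`. -/
theorem IsElementwisePullback.map_exists_heq (h : IsElementwisePullback fst snd f g)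
    {a a' : A} {b b' : B} (d : a ⟶ a') (e : b ⟶ b') (hde : f.map d ≍ g.map e) (p q : P)
    (hpa : fst.obj p = a) (hqa : fst.obj q = a') (hpb : snd.obj p = b) (hqb : snd.obj q = b') :
    ∃ x : p ⟶ q, fst.map x ≍ d ∧ snd.map x ≍ e := by
  subst hpa hqa hpb hqb
  obtain ⟨x, hd, he⟩ := h.map_exists p q d e hde
  exact ⟨x, heq_of_eq hd, heq_of_eq he⟩

theorem IsElementwisePullback.exists_lift (h : IsElementwisePullback fst snd f g)
    {S : Type u} [Quiver.{u} S] (k : S ⥤q A) (l : S ⥤q B) (w : k ⋙q f = l ⋙q g) :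
    ∃ m : S ⥤q P, m ⋙q fst = k ∧ m ⋙q snd = l := by
  choose o ho₁ ho₂ using fun s => h.obj_exists (k.obj s) (l.obj s) (Prefunctor.congr_obj w s)
  choose r hr₁ hr₂ using fun (s t : S) (e : s ⟶ t) =>
    h.map_exists_heq (k.map e) (l.map e) (map_heq_of_eq w e) (o s) (o t)
      (ho₁ s) (ho₁ t) (ho₂ s) (ho₂ t)
  exact ⟨⟨o, fun e => r _ _ e⟩, prefunctor_hext ho₁ hr₁, prefunctor_hext ho₂ hr₂⟩

theorem IsElementwisePullback.lift_unique (h : IsElementwisePullback fst snd f g)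
    {S : Type u} [Quiver.{u} S] (m n : S ⥤q P) (h₁ : m ⋙q fst = n ⋙q fst)
    (h₂ : m ⋙q snd = n ⋙q snd) : m = n := by
  obtain ⟨mo, mm⟩ := m
  obtain ⟨no, nm⟩ := n
  obtain rfl : mo = no := funext fun s =>
    h.obj_unique _ _ (Prefunctor.congr_obj h₁ s) (Prefunctor.congr_obj h₂ s)
  congr
  funext s t e
  exact h.map_unique _ _ _ _ (eq_of_heq (map_heq_of_eq h₁ e)) (eq_of_heq (map_heq_of_eq h₂ e))

end Criterion

theorem IsElementwisePullback.isPullback {P A B C : Quiv.{u, u}} {fst : P ⟶ A} {snd : P ⟶ B}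
    {f : A ⟶ C} {g : B ⟶ C} (h : IsElementwisePullback fst snd f g) :
    IsPullback fst snd f g := by
  refine ⟨⟨h.comm⟩, ⟨PullbackCone.IsLimit.mk h.comm
    (fun s => (h.exists_lift s.fst s.snd s.condition).choose)
    (fun s => (h.exists_lift s.fst s.snd s.condition).choose_spec.1)
    (fun s => (h.exists_lift s.fst s.snd s.condition).choose_spec.2)
    (fun s m h₁ h₂ => ?_)⟩⟩
  have hs := (h.exists_lift s.fst s.snd s.condition).choose_spec
  exact h.lift_unique _ _ (h₁.trans hs.1.symm) (h₂.trans hs.2.symm)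

/-! ### Quivers representing vertices and arrows -/

section TestObjects

/-- The quiver with one vertex and no arrows; it represents the vertices of a quiver. -/
inductive Vertex : Type u
  | pt

instance : Quiver.{u} Vertex.{u} := ⟨fun _ _ => PEmpty⟩

/-- The vertices of the quiver `• ⟶ •`, which represents the arrows of a quiver. -/
inductive Walking : Type u
  | src
  | tgt

/-- The arrows of the quiver `• ⟶ •`. -/
inductive Walking.Arrow : Walking.{u} → Walking.{u} → Type u
  | arr : Walking.Arrow .src .tgt

instance : Quiver.{u} Walking.{u} := ⟨Walking.Arrow⟩

variable {A : Type u} [Quiver.{u} A]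

/-- The prefunctor classifying a vertex. -/
def ofVertex (a : A) : Vertex.{u} ⥤q A where
  obj _ := a
  map e := nomatch e

/-- The prefunctor classifying an arrow. -/
def ofArrow {a b : A} (e : a ⟶ b) : Walking.{u} ⥤q A where
  obj
    | .src => a
    | .tgt => b
  map
    | .arr => e

theorem ofArrow_comp_eq {B C : Type u} [Quiver.{u} B] [Quiver.{u} C] {f : A ⥤q C} {g : B ⥤q C}
    {a a' : A} {b b' : B} (d : a ⟶ a') (e : b ⟶ b') (hs : f.obj a = g.obj b)
    (ht : f.obj a' = g.obj b') (h : f.map d ≍ g.map e) :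
    ofArrow d ⋙q f = ofArrow e ⋙q g :=
  prefunctor_hext (by rintro (_ | _) <;> assumption) (by rintro _ _ ⟨⟩; exact h)

end TestObjects

/-- The elementwise conditions are the universal property tested on the two quivers representing
vertices and arrows. -/
theorem isElementwisePullback_of_isPullback {P A B C : Quiv.{u, u}} {fst : P ⟶ A} {snd : P ⟶ B}
    {f : A ⟶ C} {g : B ⟶ C} (h : IsPullback fst snd f g) :
    IsElementwisePullback fst snd f g := by
  have obj_unique : ∀ p q : P, fst.obj p = fst.obj q → snd.obj p = snd.obj q → p = q := by
    intro p q h₁ h₂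
    have := h.hom_ext (W := Quiv.of Vertex.{u}) (k := ofVertex p) (l := ofVertex q)
      (prefunctor_hext (fun _ => h₁) (fun _ _ e => nomatch e))
      (prefunctor_hext (fun _ => h₂) (fun _ _ e => nomatch e))
    exact Prefunctor.congr_obj this Vertex.pt
  refine ⟨h.w, ?_, obj_unique, ?_, ?_⟩
  · intro a b hab
    obtain ⟨m, h₁, h₂⟩ := h.exists_lift (W := Quiv.of Vertex.{u}) (ofVertex a) (ofVertex b)
      (prefunctor_hext (fun _ => hab) (fun _ _ e => nomatch e))
    exact ⟨m.obj .pt, Prefunctor.congr_obj h₁ Vertex.pt, Prefunctor.congr_obj h₂ Vertex.pt⟩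
  · intro p q d e hde
    obtain ⟨m, h₁, h₂⟩ := h.exists_lift (W := Quiv.of Walking.{u}) (ofArrow d) (ofArrow e)
      (ofArrow_comp_eq d e (Prefunctor.congr_obj h.w p) (Prefunctor.congr_obj h.w q) hde)
    have hp : m.obj .src = p := obj_unique _ _
      (Prefunctor.congr_obj h₁ Walking.src) (Prefunctor.congr_obj h₂ Walking.src)
    have hq : m.obj .tgt = q := obj_unique _ _
      (Prefunctor.congr_obj h₁ Walking.tgt) (Prefunctor.congr_obj h₂ Walking.tgt)
    have hd : fst.map (m.map Walking.Arrow.arr) ≍ d := map_heq_of_eq h₁ Walking.Arrow.arr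
    have he : snd.map (m.map Walking.Arrow.arr) ≍ e := map_heq_of_eq h₂ Walking.Arrow.arr
    generalize m.map Walking.Arrow.arr = x at hd he
    generalize m.obj .src = p' at *
    generalize m.obj .tgt = q' at *
    subst hp hq
    exact ⟨x, eq_of_heq hd, eq_of_heq he⟩
  · intro p q x y h₁ h₂
    have := h.hom_ext (W := Quiv.of Walking.{u}) (k := ofArrow x) (l := ofArrow y)
      (ofArrow_comp_eq x y rfl rfl (heq_of_eq h₁)) (ofArrow_comp_eq x y rfl rfl (heq_of_eq h₂))
    exact eq_of_heq (map_heq_of_eq this Walking.Arrow.arr)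

/-! ### Paths -/

section Paths

variable {P A B C : Type u} [Quiver.{u} P] [Quiver.{u} A] [Quiver.{u} B] [Quiver.{u} C]

theorem heq_of_cons_heq_cons {a a' b b' c c' : A} {p : Path a b} {p' : Path a' b'}
    {e : b ⟶ c} {e' : b' ⟶ c'} (ha : a = a') (hc : c = c') (h : p.cons e ≍ p'.cons e') :
    b = b' ∧ p ≍ p' ∧ e ≍ e' := by
  subst ha hc
  have h' := eq_of_heq h
  exact ⟨Path.obj_eq_of_cons_eq_cons h', Path.heq_of_cons_eq_cons h',
    Path.hom_heq_of_cons_eq_cons h'⟩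

theorem cons_heq_cons {a a' b b' c c' : A} {p : Path a b} {p' : Path a' b'}
    {e : b ⟶ c} {e' : b' ⟶ c'} (ha : a = a') (hb : b = b') (hc : c = c') (hp : p ≍ p')
    (he : e ≍ e') : p.cons e ≍ p'.cons e' := by
  subst ha hb hc hp he
  rfl

theorem length_eq_of_heq {a a' b b' : A} {p : Path a b} {p' : Path a' b'} (ha : a = a')
    (hb : b = b') (h : p ≍ p') : p.length = p'.length := by
  subst ha hb h
  rfl

theorem length_mapPath (F : A ⥤q B) {a b : A} (p : Path a b) :
    (F.mapPath p).length = p.length := by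
  induction p with
  | nil => rfl
  | cons p e ih => simp [ih]

variable {fst : P ⥤q A} {snd : P ⥤q B} {f : A ⥤q C} {g : B ⥤q C}

/-- Compatible paths in `A` and `B` lift to `P`. The endpoints `a`, `b` are kept as variables, with
their equalities to the projections of `q`, so that induction on the path `d` is possible. -/
theorem IsElementwisePullback.path_exists (h : IsElementwisePullback fst snd f g) {p : P}
    {a : A} (d : Path (fst.obj p) a) : ∀ {b : B} (e : Path (snd.obj p) b),
    f.mapPath d ≍ g.mapPath e → ∀ q : P, fst.obj q = a → snd.obj q = b →
      ∃ x : Path p q, fst.mapPath x ≍ d ∧ snd.mapPath x ≍ e := by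
  have hw : ∀ q, f.obj (fst.obj q) = g.obj (snd.obj q) := Prefunctor.congr_obj h.comm
  induction d with
  | nil =>
    intro b e hde q hqa hqb
    cases e with
    | nil =>
      obtain rfl := h.obj_unique q p hqa hqb
      exact ⟨.nil, HEq.rfl, HEq.rfl⟩
    | cons e v =>
      subst hqb
      have := length_eq_of_heq (hw p) (hqa ▸ hw q) hde
      simp at this
  | cons d v ih =>
    intro b e hde q hqa hqb
    cases e with
    | nil =>
      subst hqa
      have := length_eq_of_heq (hw p) (hqb ▸ hw q) hde
      simp at this
    | cons e w =>
      subst hqa hqb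
      obtain ⟨hm, hde', hvw⟩ := heq_of_cons_heq_cons (hw p) (hw q) hde
      obtain ⟨m, rfl, rfl⟩ := h.obj_exists _ _ hm
      obtain ⟨x, hx₁, hx₂⟩ := ih e hde' m rfl rfl
      obtain ⟨y, hy₁, hy₂⟩ := h.map_exists m q v w hvw
      exact ⟨x.cons y, cons_heq_cons rfl rfl rfl hx₁ (heq_of_eq hy₁),
        cons_heq_cons rfl rfl rfl hx₂ (heq_of_eq hy₂)⟩

theorem IsElementwisePullback.path_unique (h : IsElementwisePullback fst snd f g) {p q : P}
    (x : Path p q) : ∀ y : Path p q, fst.mapPath x = fst.mapPath y →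
      snd.mapPath x = snd.mapPath y → x = y := by
  induction x with
  | nil =>
    intro y h₁ h₂
    refine (y.eq_nil_of_length_zero ?_).symm
    rw [← length_mapPath fst, ← h₁]
    rfl
  | cons x v ih =>
    intro y h₁ h₂
    cases y with
    | nil => exact absurd h₁ (Path.cons_ne_nil _ _)
    | cons y w =>
      obtain ⟨hm₁, hx₁, hv₁⟩ := heq_of_cons_heq_cons rfl rfl (heq_of_eq h₁)
      obtain ⟨hm₂, hx₂, hv₂⟩ := heq_of_cons_heq_cons rfl rfl (heq_of_eq h₂)
      obtain rfl := h.obj_unique _ _ hm₁ hm₂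
      rw [ih y (eq_of_heq hx₁) (eq_of_heq hx₂),
        h.map_unique _ _ v w (eq_of_heq hv₁) (eq_of_heq hv₂)]

theorem IsElementwisePullback.freeMap (h : IsElementwisePullback fst snd f g) :
    IsElementwisePullback (Cat.freeMap fst).toPrefunctor (Cat.freeMap snd).toPrefunctor
      (Cat.freeMap f).toPrefunctor (Cat.freeMap g).toPrefunctor where
  comm := by
    have hF : Cat.freeMap fst ⋙ Cat.freeMap f = Cat.freeMap snd ⋙ Cat.freeMap g := by
      rw [← Cat.freeMap_comp, ← Cat.freeMap_comp, h.comm]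
    exact congrArg Functor.toPrefunctor hF
  obj_exists := h.obj_exists
  obj_unique := h.obj_unique
  map_exists p q d e hde := by
    obtain ⟨x, h₁, h₂⟩ := h.path_exists d e hde q rfl rfl
    exact ⟨x, eq_of_heq h₁, eq_of_heq h₂⟩
  map_unique p q x y h₁ h₂ := h.path_unique x y h₁ h₂

/-- A path whose image has length one is itself a single arrow. -/
theorem exists_toPath_of_mapPath_eq (f : A ⥤q B) {p q : A} (d : f.obj p ⟶ f.obj q)
    (e : Path p q) (h : f.mapPath e = d.toPath) : ∃ v : p ⟶ q, f.map v = d ∧ e = v.toPath := by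
  have hl : e.length = 1 := by rw [← length_mapPath f, h]; rfl
  cases e with
  | nil => simp at hl
  | cons e v =>
    cases e with
    | cons e w => simp at hl
    | nil => exact ⟨v, eq_of_heq (Path.hom_heq_of_cons_eq_cons h), rfl⟩

theorem unit_isElementwisePullback (f : A ⥤q B) :
    IsElementwisePullback f (Paths.of A) (Paths.of B) (Cat.freeMap f).toPrefunctor where
  comm := rfl
  obj_exists b a h := ⟨a, h.symm, rfl⟩
  obj_unique p q _ h := h
  map_exists p q d e h := by
    obtain ⟨v, hv, he⟩ := exists_toPath_of_mapPath_eq f d e (eq_of_heq h).symm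
    exact ⟨v, hv, he.symm⟩
  map_unique p q x y _ h := eq_of_heq (Path.hom_heq_of_cons_eq_cons h)

/-- A factorisation of the image of a path lifts to a factorisation of the path. -/
theorem exists_comp_of_mapPath_eq_comp (f : A ⥤q B) {b c : B} {a : A} {r : Path (f.obj a) b}
    (s : Path b c) : ∀ {a' : A} (e : Path a a'), f.obj a' = c → f.mapPath e ≍ r.comp s →
      ∃ (m : A) (e₁ : Path a m) (e₂ : Path m a'), e = e₁.comp e₂ ∧ f.obj m = b ∧
        f.mapPath e₁ ≍ r ∧ f.mapPath e₂ ≍ s := by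
  induction s with
  | nil => exact fun {a'} e hc he => ⟨a', e, .nil, rfl, hc, he, by subst hc; rfl⟩
  | cons s v ih =>
    intro a' e hc he
    cases e with
    | nil =>
      have := length_eq_of_heq rfl hc he
      simp at this
    | cons e w =>
      obtain ⟨hm, he', hv⟩ := heq_of_cons_heq_cons rfl hc he
      obtain ⟨m, e₁, e₂, rfl, rfl, h₁, h₂⟩ := ih e hm he'
      exact ⟨m, e₁, e₂.cons w, rfl, rfl, h₁, cons_heq_cons rfl hm hc h₂ hv⟩

/-- `Quiver.Path.comp_inj` without assuming that the two intermediate vertices agree. -/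
theorem comp_inj_of_length_eq {a b b' c : A} {p : Path a b} {p' : Path a b'} {q : Path b c}
    {q' : Path b' c} (hl : q.length = q'.length) (h : p.comp q = p'.comp q') :
    b = b' ∧ p ≍ p' ∧ q ≍ q' := by
  induction q with
  | nil =>
    cases q' with
    | nil => exact ⟨rfl, heq_of_eq h, HEq.rfl⟩
    | cons q' w => simp at hl
  | cons q v ih =>
    cases q' with
    | nil => simp at hl
    | cons q' w =>
      obtain ⟨hm, hp, hv⟩ := heq_of_cons_heq_cons rfl rfl (heq_of_eq h)
      subst hm
      obtain ⟨rfl, hp', hq⟩ := ih (Nat.succ.inj hl) (eq_of_heq hp)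
      exact ⟨rfl, hp', cons_heq_cons rfl rfl rfl hq hv⟩

/-- A subdivision `d` of the image of a path `e` lifts to a subdivision of `e`. -/
theorem mult_exists (f : A ⥤q B) {a : A} {b : Paths B}
    (d : @Path (Paths B) _ (f.obj a) b) : ∀ {a' : A} (e : Path a a'), f.obj a' = b →
      f.mapPath e ≍ composePath d →
      ∃ x : @Path (Paths A) _ a a',
        (Cat.freeMap f).toPrefunctor.mapPath x ≍ d ∧ composePath x = e := by
  induction d with
  | nil =>
    intro a' e hb he
    have hl : e.length = 0 := by
      rw [← length_mapPath f]
      exact length_eq_of_heq rfl hb he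
    obtain rfl := e.eq_of_length_zero hl
    obtain rfl := e.eq_nil_of_length_zero hl
    exact ⟨.nil, HEq.rfl, rfl⟩
  | cons d s ih =>
    intro a' e hb he
    obtain ⟨m, e₁, e₂, rfl, hm, h₁, h₂⟩ := exists_comp_of_mapPath_eq_comp f s e hb he
    obtain ⟨x, hx, rfl⟩ := ih e₁ hm h₁
    exact ⟨x.cons e₂, cons_heq_cons rfl hm hb hx h₂, rfl⟩

/-- A path of paths is determined by its composite and its image: the image records the lengths of
the segments. -/
theorem mult_unique (f : A ⥤q B) {a b : Paths A} (x : Path a b) : ∀ y : Path a b,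
    (Cat.freeMap f).toPrefunctor.mapPath x = (Cat.freeMap f).toPrefunctor.mapPath y →
      composePath x = composePath y → x = y := by
  induction x with
  | nil =>
    intro y h₁ h₂
    refine (y.eq_nil_of_length_zero ?_).symm
    rw [← length_mapPath (Cat.freeMap f).toPrefunctor, ← h₁]
    rfl
  | cons x v ih =>
    intro y h₁ h₂
    cases y with
    | nil => exact absurd h₁ (Path.cons_ne_nil _ _)
    | cons y w =>
      obtain ⟨hm, hx, hv⟩ := heq_of_cons_heq_cons rfl rfl (heq_of_eq h₁)
      have hl : Path.length (V := A) v = Path.length (V := A) w :=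
        (length_mapPath f v).symm.trans
          ((length_eq_of_heq (A := B) hm rfl hv).trans (length_mapPath f w))
      obtain ⟨rfl, hx', hv'⟩ := comp_inj_of_length_eq (A := A) hl h₂
      rw [ih y (eq_of_heq hx) (eq_of_heq hx'), eq_of_heq hv']

theorem mult_isElementwisePullback (f : A ⥤q B) :
    IsElementwisePullback (Cat.freeMap (Cat.freeMap f).toPrefunctor).toPrefunctor
      (pathComposition (Paths A)).toPrefunctor (pathComposition (Paths B)).toPrefunctor
      (Cat.freeMap f).toPrefunctor where
  comm := congrArg Functor.toPrefunctor (Quiv.pathComposition_naturality (Cat.freeMap f))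
  obj_exists b a h := ⟨a, h.symm, rfl⟩
  obj_unique p q _ h := h
  map_exists p q d e h := by
    obtain ⟨x, h₁, h₂⟩ := mult_exists f d e rfl h.symm
    exact ⟨x, eq_of_heq h₁, h₂⟩
  map_unique p q x y h₁ h₂ := mult_unique f x y h₁ h₂

end Paths

end FreeCategoryMonad

open FreeCategoryMonad in
/-- The free category monad `fc` on `Quiv` (induced by the
adjunction `Cat.free ⊣ Quiv.forget`) is cartesian: its underlying endofunctor
preserves pullbacks, and every naturality square of the unit and of the
multiplication is a pullback square in `Quiv`. -/
theorem free_category_monad_cartesian :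
    PreservesLimitsOfShape WalkingCospan Quiv.adj.{u, u}.toMonad.toFunctor ∧
    (∀ {X Y : Quiv.{u, u}} (f : X ⟶ Y),
      IsPullback f (Quiv.adj.{u, u}.toMonad.η.app X) (Quiv.adj.{u, u}.toMonad.η.app Y)
        (Quiv.adj.{u, u}.toMonad.toFunctor.map f)) ∧
    (∀ {X Y : Quiv.{u, u}} (f : X ⟶ Y),
      IsPullback
        (Quiv.adj.{u, u}.toMonad.toFunctor.map (Quiv.adj.{u, u}.toMonad.toFunctor.map f))
        (Quiv.adj.{u, u}.toMonad.μ.app X) (Quiv.adj.{u, u}.toMonad.μ.app Y)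
        (Quiv.adj.{u, u}.toMonad.toFunctor.map f)) := by
  refine ⟨⟨fun {K} => ?_⟩, fun {X Y} f => ?_, fun {X Y} f => ?_⟩
  · suffices PreservesLimit (cospan (K.map WalkingCospan.Hom.inl) (K.map WalkingCospan.Hom.inr))
        Quiv.adj.{u, u}.toMonad.toFunctor from
      preservesLimit_of_iso_diagram _ (diagramIsoCospan K).symm
    refine ⟨fun {c} hc => ⟨?_⟩⟩
    have hc' := isElementwisePullback_of_isPullback (IsPullback.of_isLimit hc)
    have hT : IsPullback (Quiv.adj.{u, u}.toMonad.toFunctor.map (PullbackCone.fst c))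
        (Quiv.adj.{u, u}.toMonad.toFunctor.map (PullbackCone.snd c))
        (Quiv.adj.{u, u}.toMonad.toFunctor.map (K.map WalkingCospan.Hom.inl))
        (Quiv.adj.{u, u}.toMonad.toFunctor.map (K.map WalkingCospan.Hom.inr)) :=
      IsElementwisePullback.isPullback hc'.freeMap
    exact (PullbackCone.isLimitMapConeEquiv c _).symm hT.isLimit
  · exact IsElementwisePullback.isPullback (unit_isElementwisePullback f)
  · exact IsElementwisePullback.isPullback (mult_isElementwisePullback f)
end

section
/- The free category monad on quivers is finitary: the underlying endofunctor of the monad on Quiv induced by the adjunction between the free category functor and the forgetful functor Cat ⥤ Quiv preserves filtered colimits. -/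
/-!
A quiver amounts to a type of vertices and a type of arrows, with source and target maps. Both
`vertices : Quiv ⥤ Type` and `arrows : Quiv ⥤ Type` are left adjoints (their right adjoints send
`X` to the indiscrete quiver on `X`, respectively to the one-vertex quiver with loops `X`), hence
preserve colimits, and together they reflect colimits (`isColimitOfVerticesArrows`).

The monad leaves vertices unchanged and replaces arrows by paths, so it remains to see that the
total type of paths commutes with filtered colimits. This is where filteredness enters: a path
consists of finitely many arrows subject to finitely many equations between vertices, so by
induction on its length it lifts to some stage of the diagram (`exists_path_lift`), and two
paths with the same image in the colimit already agree at a later stage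
(`exists_path_eq`).
-/

open CategoryTheory CategoryTheory.Limits

universe u

namespace FreeCategoryFinitary

/-! ### Vertices and arrows of a quiver -/

/-- The total type of arrows of a quiver: an arrow together with its endpoints. -/
@[ext]
structure Arr (V : Type u) [Quiver.{u} V] : Type u where
  /-- the source vertex -/
  src : V
  /-- the target vertex -/
  tgt : V
  /-- the arrow itself -/
  hom : src ⟶ tgt

/-- The action of a prefunctor on the total type of arrows. -/
def Arr.map {V W : Type u} [Quiver.{u} V] [Quiver.{u} W] (φ : V ⥤q W) (e : Arr V) : Arr W :=
  ⟨φ.obj e.src, φ.obj e.tgt, φ.map e.hom⟩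

/-- The functor sending a quiver to its type of vertices. -/
def vertices : Quiv.{u, u} ⥤ Type u where
  obj Q := Q
  map φ := ↾(Prefunctor.ofQuivHom φ).obj

/-- The functor sending a quiver to its total type of arrows. -/
def arrows : Quiv.{u, u} ⥤ Type u where
  obj Q := Arr Q
  map φ := ↾(Arr.map (Prefunctor.ofQuivHom φ))

/-- The indiscrete quiver on `X`: exactly one arrow between any two vertices. -/
def Indiscrete (X : Type u) : Type u := X

instance (X : Type u) : Quiver.{u} (Indiscrete X) := ⟨fun _ _ => PUnit⟩

/-- The quiver with a single vertex and one loop for each element of `X`. -/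
def Loops (_ : Type u) : Type u := PUnit

instance (X : Type u) : Quiver.{u} (Loops X) := ⟨fun _ _ => X⟩

/-- The indiscrete quiver, as a functor. -/
def indiscrete : Type u ⥤ Quiv.{u, u} where
  obj X := Quiv.of (Indiscrete X)
  map {X Y} f := Prefunctor.toQuivHom (C := Indiscrete X) (D := Indiscrete Y)
    ⟨fun x => f x, fun _ => PUnit.unit⟩

/-- The one-vertex quiver with prescribed loops, as a functor. -/
def loops : Type u ⥤ Quiv.{u, u} where
  obj X := Quiv.of (Loops X)
  map {X Y} f := Prefunctor.toQuivHom (C := Loops X) (D := Loops Y)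
    ⟨fun _ => PUnit.unit, fun {_ _} x => (f : X → Y) x⟩

/-- Prefunctors into an indiscrete quiver are maps of vertices. -/
def verticesAdj : vertices.{u} ⊣ indiscrete.{u} :=
  Adjunction.mkOfHomEquiv
    { homEquiv := fun Q X =>
        { toFun := fun f => Prefunctor.toQuivHom (C := Q) (D := Indiscrete X)
            ⟨fun x => (f : vertices.obj Q → X) x, fun _ => PUnit.unit⟩
          invFun := fun φ => ↾(Prefunctor.ofQuivHom φ).obj
          left_inv := fun _ => rfl
          right_inv := fun _ => rfl }
      homEquiv_naturality_left_symm := fun _ _ => rfl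
      homEquiv_naturality_right := fun _ _ => rfl }

/-- Prefunctors into a one-vertex quiver are maps of arrows. -/
def arrowsAdj : arrows.{u} ⊣ loops.{u} :=
  Adjunction.mkOfHomEquiv
    { homEquiv := fun Q X =>
        { toFun := fun f => Prefunctor.toQuivHom (C := Q) (D := Loops X)
            ⟨fun _ => PUnit.unit, fun {a b} e => (f : Arr Q → X) ⟨a, b, e⟩⟩
          invFun := fun φ => ↾fun e : Arr Q => ((Prefunctor.ofQuivHom φ).map e.hom : X)
          left_inv := fun _ => rfl
          right_inv := fun _ => rfl }
      homEquiv_naturality_left_symm := fun _ _ => rfl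
      homEquiv_naturality_right := fun _ _ => rfl }

/-- A map of vertices and a map of arrows compatible with sources and targets come from a
prefunctor. -/
lemma exists_prefunctor {V W : Type u} [Quiver.{u} V] [Quiver.{u} W] (v : V → W)
    (e : Arr V → Arr W) (hs : ∀ x, (e x).src = v x.src) (ht : ∀ x, (e x).tgt = v x.tgt) :
    ∃ φ : V ⥤q W, φ.obj = v ∧ Arr.map φ = e := by
  refine ⟨⟨v, fun {a b} f => Quiver.homOfEq (e ⟨a, b, f⟩).hom (hs _) (ht _)⟩, rfl, ?_⟩
  funext x
  have key : ∀ (y : Arr W) (a b : W) (h : y.src = a) (h' : y.tgt = b),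
      (⟨a, b, Quiver.homOfEq y.hom h h'⟩ : Arr W) = y := by
    rintro y _ _ rfl rfl
    rfl
  exact key _ _ _ (hs x) (ht x)

lemma prefunctor_ext {V W : Type u} [Quiver.{u} V] [Quiver.{u} W] {φ ψ : V ⥤q W}
    (hv : φ.obj = ψ.obj) (he : Arr.map φ = Arr.map ψ) : φ = ψ := by
  obtain ⟨v, m⟩ := φ
  obtain ⟨v', m'⟩ := ψ
  obtain rfl : v = v' := hv
  congr
  funext a b f
  have := congrFun he ⟨a, b, f⟩
  simpa [Arr.map] using this

variable {J : Type u} [SmallCategory J]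

/-- The functors `vertices` and `arrows` jointly reflect colimits. -/
lemma isColimitOfVerticesArrows {F : J ⥤ Quiv.{u, u}} (c : Cocone F)
    (hV : IsColimit (vertices.mapCocone c)) (hE : IsColimit (arrows.mapCocone c)) :
    Nonempty (IsColimit c) := by
  have ex : ∀ s : Cocone F, ∃ φ : c.pt ⟶ s.pt,
      vertices.map φ = hV.desc (vertices.mapCocone s) ∧
      arrows.map φ = hE.desc (arrows.mapCocone s) := by
    intro s
    have facV : ∀ j (x : vertices.obj (F.obj j)), hV.desc (vertices.mapCocone s)
        (vertices.map (c.ι.app j) x) = vertices.map (s.ι.app j) x := fun j x =>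
      ConcreteCategory.congr_hom (hV.fac (vertices.mapCocone s) j) x
    have facE : ∀ j (x : arrows.obj (F.obj j)), hE.desc (arrows.mapCocone s)
        (arrows.map (c.ι.app j) x) = arrows.map (s.ι.app j) x := fun j x =>
      ConcreteCategory.congr_hom (hE.fac (arrows.mapCocone s) j) x
    obtain ⟨φ, h₁, h₂⟩ := exists_prefunctor (V := c.pt) (W := s.pt)
      (fun x => hV.desc (vertices.mapCocone s) x)
      (fun x => hE.desc (arrows.mapCocone s) x)
      (by
        intro x
        obtain ⟨j, y, rfl⟩ := Types.jointly_surjective_of_isColimit hE x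
        exact (congrArg Arr.src (facE j y)).trans (facV j (Arr.src (V := F.obj j) y)).symm)
      (by
        intro x
        obtain ⟨j, y, rfl⟩ := Types.jointly_surjective_of_isColimit hE x
        exact (congrArg Arr.tgt (facE j y)).trans (facV j (Arr.tgt (V := F.obj j) y)).symm)
    refine ⟨φ, ?_, ?_⟩
    · ext x
      exact congrFun h₁ x
    · ext x
      exact congrFun h₂ x
  have ext' : ∀ {A B : Quiv.{u, u}} {φ ψ : A ⟶ B}, vertices.map φ = vertices.map ψ →
      arrows.map φ = arrows.map ψ → φ = ψ := by
    intro A B φ ψ h₁ h₂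
    exact prefunctor_ext (funext fun x => ConcreteCategory.congr_hom h₁ x)
      (funext fun x => ConcreteCategory.congr_hom h₂ x)
  choose d hd₁ hd₂ using ex
  refine ⟨⟨d, fun s j => ext' ?_ ?_, fun s m hm => ext' ?_ ?_⟩⟩
  · rw [Functor.map_comp, hd₁]
    exact hV.fac (vertices.mapCocone s) j
  · rw [Functor.map_comp, hd₂]
    exact hE.fac (arrows.mapCocone s) j
  · rw [hd₁]
    refine hV.uniq (vertices.mapCocone s) _ fun j => ?_
    exact (vertices.map_comp _ _).symm.trans (congrArg vertices.map (hm j))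
  · rw [hd₂]
    refine hE.uniq (arrows.mapCocone s) _ fun j => ?_
    exact (arrows.map_comp _ _).symm.trans (congrArg arrows.map (hm j))

/-! ### Paths in a filtered colimit of quivers -/

/-- A path with its endpoints, as an element of the total type of arrows of the free category. -/
def pth {V : Type u} [Quiver.{u} V] {a b : V} (p : Quiver.Path a b) : Arr (Paths V) :=
  ⟨a, b, p⟩

/-- The action of a prefunctor on paths with their endpoints. -/
def pmap {V W : Type u} [Quiver.{u} V] [Quiver.{u} W] (φ : V ⥤q W) :
    Arr (Paths V) → Arr (Paths W) :=
  Arr.map (Cat.freeMap φ).toPrefunctor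

section
variable {V W : Type u} [Quiver.{u} V] [Quiver.{u} W]

lemma pmap_pth (φ : V ⥤q W) {a b : V} (p : Quiver.Path a b) :
    pmap φ (pth p) = pth (φ.mapPath p) := rfl

lemma pth_cons_inj {a b d a' b' d' : V} {p : Quiver.Path a b} {e : b ⟶ d}
    {p' : Quiver.Path a' b'} {e' : b' ⟶ d'} :
    pth (p.cons e) = pth (p'.cons e') ↔
      pth p = pth p' ∧ (⟨b, d, e⟩ : Arr V) = ⟨b', d', e'⟩ := by
  constructor
  · intro h
    unfold pth at h
    cases h
    exact ⟨rfl, rfl⟩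
  · rintro ⟨h, h'⟩
    unfold pth at h
    cases h
    cases h'
    rfl

lemma pth_nil_ne_cons {x a b d : V} (p : Quiver.Path a b) (e : b ⟶ d) :
    pth (Quiver.Path.nil : Quiver.Path x x) ≠ pth (p.cons e) := by
  intro h
  unfold pth at h
  have hl : ∀ {y z : Arr (Paths V)}, y = z →
      Quiver.Path.length (V := V) y.hom = Quiver.Path.length (V := V) z.hom := by
    rintro y _ rfl
    rfl
  have := hl h
  simp at this

/-- A lift of a path and a lift of an arrow which are composable give a lift of the
extended path. -/
lemma exists_cons_lift (φ : V ⥤q W) {a b d : W} {p : Quiver.Path a b} {e : b ⟶ d}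
    {x : Arr (Paths V)} {y : Arr V} (hx : pmap φ x = pth p) (hy : Arr.map φ y = ⟨b, d, e⟩)
    (h : x.tgt = y.src) : ∃ z, pmap φ z = pth (p.cons e) := by
  obtain ⟨x₁, x₂, q⟩ := x
  obtain ⟨y₁, y₂, f⟩ := y
  obtain rfl : x₂ = y₁ := h
  exact ⟨pth (V := V) (Quiver.Path.cons q f), (pth_cons_inj (V := W)).2 ⟨hx, hy⟩⟩

end

lemma vertices_w {F : J ⥤ Quiv.{u, u}} (c : Cocone F) {i j : J} (f : i ⟶ j)
    (x : F.obj i) : (c.ι.app j).obj ((F.map f).obj x) = (c.ι.app i).obj x :=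
  ConcreteCategory.congr_hom ((vertices.mapCocone c).w f) x

lemma arrows_w {F : J ⥤ Quiv.{u, u}} (c : Cocone F) {i j : J} (f : i ⟶ j)
    (x : Arr (F.obj i)) : Arr.map (c.ι.app j) (Arr.map (F.map f) x) = Arr.map (c.ι.app i) x :=
  ConcreteCategory.congr_hom ((arrows.mapCocone c).w f) x

/-- The endofunctor of quivers underlying the free category monad. -/
abbrev freeMonad : Quiv.{u, u} ⥤ Quiv.{u, u} := Quiv.adj.{u, u}.toMonad.toFunctor

lemma paths_w {F : J ⥤ Quiv.{u, u}} (c : Cocone F) {i j : J} (f : i ⟶ j)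
    (x : Arr (Paths (F.obj i))) : pmap (c.ι.app j) (pmap (F.map f) x) = pmap (c.ι.app i) x :=
  ConcreteCategory.congr_hom (((freeMonad ⋙ arrows).mapCocone c).w f) x

lemma paths_comp (F : J ⥤ Quiv.{u, u}) {i j k : J} (f : i ⟶ j) (g : j ⟶ k)
    (x : Arr (Paths (F.obj i))) :
    pmap (F.map (f ≫ g)) x = pmap (F.map g) (pmap (F.map f) x) :=
  ConcreteCategory.congr_hom ((F ⋙ freeMonad ⋙ arrows).map_comp f g) x

lemma arrows_comp (F : J ⥤ Quiv.{u, u}) {i j k : J} (f : i ⟶ j) (g : j ⟶ k)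
    (x : Arr (F.obj i)) :
    Arr.map (F.map (f ≫ g)) x = Arr.map (F.map g) (Arr.map (F.map f) x) :=
  ConcreteCategory.congr_hom ((F ⋙ arrows).map_comp f g) x

variable [IsFiltered J]

/-- Every path in a filtered colimit of quivers lifts to some stage of the diagram. -/
lemma exists_path_lift {F : J ⥤ Quiv.{u, u}} {c : Cocone F}
    (hV : IsColimit (vertices.mapCocone c)) (hE : IsColimit (arrows.mapCocone c))
    {a b : c.pt} (p : Quiver.Path a b) :
    ∃ (j : J) (x : Arr (Paths (F.obj j))), pmap (c.ι.app j) x = pth p := by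
  induction p with
  | nil =>
    obtain ⟨j, x, hx⟩ := Types.jointly_surjective_of_isColimit hV a
    have hx' : (c.ι.app j).obj x = a := hx
    subst hx'
    exact ⟨j, pth (V := F.obj j) (a := x) Quiver.Path.nil, rfl⟩
  | @cons b d p e ih =>
    obtain ⟨i, x, hx⟩ := ih
    obtain ⟨j, y, hy⟩ := Types.jointly_surjective_of_isColimit hE (⟨b, d, e⟩ : Arr c.pt)
    have hy' : Arr.map (c.ι.app j) y = ⟨b, d, e⟩ := hy
    -- The lifts need not be composable, but the vertices where they should meet have the
    -- same image in the colimit, so they agree at a later stage.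
    have hmeet : (c.ι.app i).obj x.tgt = (c.ι.app j).obj (Arr.src y) :=
      (congrArg Arr.tgt hx).trans (congrArg Arr.src hy').symm
    obtain ⟨k, f, g, hk⟩ := (Types.FilteredColimit.isColimit_eq_iff _ hV).1 hmeet
    exact ⟨k, exists_cons_lift (c.ι.app k) (x := pmap (F.map f) x) (y := Arr.map (F.map g) y)
      ((paths_w c f x).trans hx) ((arrows_w c g y).trans hy') hk⟩

/-- Two paths at one stage of a filtered diagram of quivers which agree in the colimit agree at
a later stage. -/
lemma exists_path_eq {F : J ⥤ Quiv.{u, u}} {c : Cocone F}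
    (hV : IsColimit (vertices.mapCocone c)) (hE : IsColimit (arrows.mapCocone c))
    {j : J} {a b a' b' : F.obj j} (p : Quiver.Path a b) (q : Quiver.Path a' b')
    (h : pmap (c.ι.app j) (pth p) = pmap (c.ι.app j) (pth q)) :
    ∃ (k : J) (f : j ⟶ k), pmap (F.map f) (pth p) = pmap (F.map f) (pth q) := by
  induction p generalizing b' with
  | nil =>
    cases q with
    | nil =>
      have h' : (c.ι.app j).obj a = (c.ι.app j).obj a' := congrArg Arr.src h
      obtain ⟨k, f, hk⟩ := (Types.FilteredColimit.isColimit_eq_iff' hV _ _).1 h'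
      have hk' : (F.map f).obj a = (F.map f).obj a' := hk
      refine ⟨k, f, ?_⟩
      rw [pmap_pth, pmap_pth, Prefunctor.mapPath_nil, Prefunctor.mapPath_nil, hk']
    | cons q e => exact (pth_nil_ne_cons (V := c.pt) _ _ h).elim
  | cons p e ih =>
    cases q with
    | nil => exact (pth_nil_ne_cons (V := c.pt) _ _ h.symm).elim
    | cons q e' =>
      obtain ⟨h₁, h₂⟩ := (pth_cons_inj (V := c.pt)).1 h
      obtain ⟨k, f, hf⟩ := ih q h₁
      obtain ⟨l, g, hg⟩ := (Types.FilteredColimit.isColimit_eq_iff' hE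
        (⟨_, _, e⟩ : Arr (F.obj j)) (⟨_, _, e'⟩ : Arr (F.obj j))).1 h₂
      have hg' : Arr.map (F.map g) ⟨_, _, e⟩ = Arr.map (F.map g) ⟨_, _, e'⟩ := hg
      obtain ⟨m, s, t, hst⟩ := IsFiltered.span f g
      refine ⟨m, f ≫ s, (pth_cons_inj (V := F.obj m)).2 ⟨?_, ?_⟩⟩
      · change pmap (F.map (f ≫ s)) (pth p) = pmap (F.map (f ≫ s)) (pth q)
        rw [paths_comp, paths_comp, hf]
      · change Arr.map (F.map (f ≫ s)) ⟨_, _, e⟩ = Arr.map (F.map (f ≫ s)) ⟨_, _, e'⟩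
        rw [hst, arrows_comp, arrows_comp, hg']

end FreeCategoryFinitary

open FreeCategoryFinitary in
/-- The free category monad on `Quiv` (induced by the adjunction
`Cat.free ⊣ Quiv.forget`) is finitary: its underlying endofunctor preserves
filtered colimits. -/
theorem free_category_monad_finitary (J : Type u) [SmallCategory J] [IsFiltered J] :
    PreservesColimitsOfShape J Quiv.adj.{u, u}.toMonad.toFunctor := by
  refine ⟨fun {F} => ⟨fun {c} hc => ?_⟩⟩
  have := verticesAdj.{u}.leftAdjoint_preservesColimits
  have := arrowsAdj.{u}.leftAdjoint_preservesColimits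
  have hV : IsColimit (vertices.mapCocone c) := isColimitOfPreserves vertices hc
  have hE : IsColimit (arrows.mapCocone c) := isColimitOfPreserves arrows hc
  -- The monad does not change vertices, so the first argument is `hV` up to unfolding.
  refine isColimitOfVerticesArrows (freeMonad.mapCocone c) hV ?_
  refine Types.FilteredColimit.isColimitOf' _ _ ?_ ?_
  · intro p
    obtain ⟨j, x, hx⟩ := exists_path_lift hV hE (Arr.hom p)
    exact ⟨j, x, hx.symm⟩
  · intro j x y h
    exact exists_path_eq hV hE (Arr.hom x) (Arr.hom y) h
end

section
/- The underlying endofunctor of the free category monad on Quiv (the monad induced by the adjunction between the free category functor and the forgetful functor Cat ⥤ Quiv) preserves all small coproducts (colimits of discrete diagrams). -/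
/-!
A path in a disjoint union of quivers never leaves the summand it starts in, so the quiver of paths
in `Σ j, V j` is the disjoint union of the quivers of paths in the `V j`. Disjoint unions, with
arrows `SigmaArrow`, are the coproducts of `Quiv` (`sigmaIsColimit`), and `sigmaPathsIso` is the
resulting isomorphism; it carries the coproduct injections of the path quivers to the images of
the coproduct injections of the `V j`, so the latter form a colimit cofan too.
-/

open CategoryTheory CategoryTheory.Limits

universe u

namespace FreeCategoryCoproducts

variable {J : Type u}

/-- Arrows of the disjoint union of a family of quivers: there is a copy of every arrow of every
summand, and no arrow between different summands. -/
inductive SigmaArrow (V : J → Quiv.{u, u}) : (Σ j, V j) → (Σ j, V j) → Type u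
  | mk {j : J} {x y : V j} (e : x ⟶ y) : SigmaArrow V ⟨j, x⟩ ⟨j, y⟩

/-- The disjoint union of a family of quivers. -/
def sigmaQuiv (V : J → Quiv.{u, u}) : Quiv.{u, u} :=
  ⟨Σ j, V j, ⟨SigmaArrow V⟩⟩

/-- The inclusion of a summand into the disjoint union. -/
def sigmaIncl (V : J → Quiv.{u, u}) (j : J) : V j ⟶ sigmaQuiv V :=
  Prefunctor.mk (fun x => (⟨j, x⟩ : Σ j, V j)) (fun e => SigmaArrow.mk e)

/-- The map out of a disjoint union determined by maps out of the summands. -/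
def sigmaDesc (V : J → Quiv.{u, u}) {W : Quiv.{u, u}} (φ : ∀ j, V j ⟶ W) : sigmaQuiv V ⟶ W :=
  Prefunctor.mk (fun a => (φ a.1).obj a.2)
    (fun {_ _} e => match e with | SigmaArrow.mk e => (φ _).map e)

lemma sigma_hom_ext (V : J → Quiv.{u, u}) {W : Quiv.{u, u}} {F G : sigmaQuiv V ⟶ W}
    (h : ∀ j, sigmaIncl V j ≫ F = sigmaIncl V j ≫ G) : F = G := by
  refine Prefunctor.ext' (fun a => ?_) (fun a b e => ?_)
  · obtain ⟨j, x⟩ := a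
    exact Prefunctor.congr_obj (h j) x
  · change SigmaArrow V a b at e
    cases e with
    | mk e => exact (Prefunctor.congr_hom (h _).symm e).symm

/-- Disjoint unions are coproducts in `Quiv`. -/
def sigmaIsColimit (V : J → Quiv.{u, u}) :
    IsColimit (Cofan.mk (sigmaQuiv V) (sigmaIncl V)) :=
  Cofan.IsColimit.mk _ (fun s => sigmaDesc V s.inj) (fun _ _ => rfl)
    (fun _ _ hm => sigma_hom_ext V fun j => hm j)

/-- The quiver of paths of a quiver. -/
abbrev pathQuiv (V : Quiv.{u, u}) : Quiv.{u, u} :=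
  Quiv.adj.{u, u}.toMonad.toFunctor.obj V

/-- Extending a path in one summand by an arrow of the disjoint union; the arrow lies in the same
summand because the endpoints match. -/
def snocArrow (V : J → Quiv.{u, u}) {a b c : Σ j, V j}
    (q : SigmaArrow (fun j => pathQuiv (V j)) a b) (e : SigmaArrow V b c) :
    SigmaArrow (fun j => pathQuiv (V j)) a c :=
  match e, q with
  | SigmaArrow.mk e, SigmaArrow.mk q => SigmaArrow.mk (Quiver.Path.cons q e)

/-- A path in a disjoint union is a path in a single summand. -/
def splitPath (V : J → Quiv.{u, u}) {a : sigmaQuiv V} :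
    ∀ {b : sigmaQuiv V}, Quiver.Path a b → SigmaArrow (fun j => pathQuiv (V j)) a b
  | _, .nil => SigmaArrow.mk (V := fun j => pathQuiv (V j)) (j := a.1) (x := a.2) Quiver.Path.nil
  | _, .cons p e => snocArrow V (splitPath V p) e

/-- The comparison map from the disjoint union of path quivers to the path quiver of the disjoint
union. -/
def joinPaths (V : J → Quiv.{u, u}) :
    sigmaQuiv (fun j => pathQuiv (V j)) ⟶ pathQuiv (sigmaQuiv V) :=
  sigmaDesc _ fun j => Quiv.adj.{u, u}.toMonad.toFunctor.map (sigmaIncl V j)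

/-- `splitPath` as a map of quivers. -/
def splitPaths (V : J → Quiv.{u, u}) :
    pathQuiv (sigmaQuiv V) ⟶ sigmaQuiv (fun j => pathQuiv (V j)) :=
  Prefunctor.mk (fun a => a) (fun p => splitPath V p)

lemma splitPath_mapPath (V : J → Quiv.{u, u}) {j : J} {x y : V j} (p : Quiver.Path x y) :
    splitPath V ((sigmaIncl V j).mapPath p) =
      SigmaArrow.mk (V := fun j => pathQuiv (V j)) p := by
  induction p with
  | nil => rfl
  | cons p e ih =>
    change snocArrow V (splitPath V ((sigmaIncl V j).mapPath p)) (SigmaArrow.mk e) = _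
    rw [ih]
    rfl

lemma joinPaths_snocArrow (V : J → Quiv.{u, u}) {a b c : Σ j, V j}
    (q : SigmaArrow (fun j => pathQuiv (V j)) a b) (e : SigmaArrow V b c) :
    (joinPaths V).map (snocArrow V q e) =
      Quiver.Path.cons (V := sigmaQuiv V) ((joinPaths V).map q) e :=
  match e, q with
  | SigmaArrow.mk _, SigmaArrow.mk _ => rfl

lemma joinPaths_splitPath (V : J → Quiv.{u, u}) {a b : sigmaQuiv V} (p : Quiver.Path a b) :
    (joinPaths V).map (splitPath V p) = p := by
  induction p with
  | nil => rfl
  | cons p e ih =>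
    exact (joinPaths_snocArrow V (splitPath V p) e).trans
      (congrArg (fun r => Quiver.Path.cons r e) ih)

/-- The path quiver of a disjoint union is the disjoint union of the path quivers. -/
def sigmaPathsIso (V : J → Quiv.{u, u}) :
    sigmaQuiv (fun j => pathQuiv (V j)) ≅ pathQuiv (sigmaQuiv V) where
  hom := joinPaths V
  inv := splitPaths V
  hom_inv_id := sigma_hom_ext _ fun _ =>
    Prefunctor.ext' (fun _ => rfl) fun _ _ p => splitPath_mapPath V p
  inv_hom_id := Prefunctor.ext' (fun _ => rfl) fun _ _ p => joinPaths_splitPath V p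

end FreeCategoryCoproducts

open FreeCategoryCoproducts in
/-- The underlying endofunctor of the free category monad on
`Quiv` (induced by the adjunction `Cat.free ⊣ Quiv.forget`) preserves all
small coproducts (colimits of discrete diagrams). -/
theorem free_category_monad_preserves_coproducts (J : Type u) :
    PreservesColimitsOfShape (Discrete J) Quiv.adj.{u, u}.toMonad.toFunctor := by
  suffices ∀ V : J → Quiv.{u, u},
      PreservesColimit (Discrete.functor V) Quiv.adj.{u, u}.toMonad.toFunctor from
    preservesColimitsOfShape_of_discrete _
  intro V
  refine preservesColimit_of_preserves_colimit_cocone (sigmaIsColimit V) ?_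
  refine (isColimitMapCoconeCofanMkEquiv _ _ _).symm ?_
  exact (sigmaIsColimit fun j => pathQuiv (V j)).ofIsoColimit
    (Cofan.ext (sigmaPathsIso V) fun _ => rfl)
end

section
/- Let C be a small category and h : C ⥤ Type a functor. Then the functor category from the category of elements of h to Type is equivalent to the slice of the functor category (C ⥤ Type) over h: there is an equivalence of categories (∫h ⥤ Type) ≃ (C ⥤ Type)/h. -/
open CategoryTheory

universe u

/-!
A functor `F : h.Elements ⥤ Type u` is a family of sets `F (c, x)` indexed by the elements of `h`;
its total space `c ↦ Σ x : h c, F (c, x)` is a functor on `C` with a projection to `h`.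
Conversely, a map `p : X ⟶ h` yields the family of its fibres `(c, x) ↦ {a : X c // p a = x}`.
A family is recovered as the fibres of its total space, and a functor over `h` is the disjoint union
of its fibres; `totalFunctor`, `fiberFunctor` and the isomorphisms `unitIso`, `counitIso` make this
an equivalence. Equalities in the total space are handled by `total_ext`, which compares second
components through transport along identity morphisms of `C` in place of heterogeneous equality.
-/

namespace ElementsOver

variable {C : Type u} [SmallCategory C] {h : C ⥤ Type u}

/-- The morphism of elements lying over the identity of `c` given by an equality `x = y`. -/
def idHom {c : C} {x y : h.obj c} (e : x = y) : h.elementsMk c x ⟶ h.elementsMk c y :=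
  CategoryOfElements.homMk _ _ (𝟙 c) (by simpa using e)

/-- The morphism of elements `(c, x) ⟶ (d, h f x)` given by `f : c ⟶ d`. -/
def pushHom {c d : C} (f : c ⟶ d) (x : h.obj c) :
    h.elementsMk c x ⟶ h.elementsMk d (h.map f x) :=
  CategoryOfElements.homMk _ _ f rfl

theorem map_idHom_rfl (F : h.Elements ⥤ Type u) {c : C} {x : h.obj c} (e : x = x)
    (a : F.obj (h.elementsMk c x)) : F.map (idHom e) a = a := by
  have : idHom e = 𝟙 (h.elementsMk c x) := rfl
  rw [this]; simp

theorem total_ext (F : h.Elements ⥤ Type u) {c : C}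
    {p q : Σ x : h.obj c, F.obj (h.elementsMk c x)} (e : p.1 = q.1)
    (w : F.map (idHom e) p.2 = q.2) : p = q := by
  obtain ⟨x, a⟩ := p
  obtain ⟨y, b⟩ := q
  obtain rfl : x = y := e
  rw [map_idHom_rfl] at w
  exact congrArg _ w

/-- Two composites of transition maps of `F` agree as soon as they lie over the same
morphism of `C`. -/
theorem map_map_eq (F : h.Elements ⥤ Type u) {p q q' r : h.Elements} (f : p ⟶ q) (g : q ⟶ r)
    (f' : p ⟶ q') (g' : q' ⟶ r) (w : f.val ≫ g.val = f'.val ≫ g'.val) (a : F.obj p) :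
    F.map g (F.map f a) = F.map g' (F.map f' a) := by
  have : f ≫ g = f' ≫ g' := CategoryOfElements.ext _ _ _ w
  rw [← comp_apply, ← comp_apply, ← F.map_comp, ← F.map_comp, this]

/-- The total space `c ↦ Σ x : h c, F (c, x)` of a family `F` over the elements of `h`. -/
def total (F : h.Elements ⥤ Type u) : C ⥤ Type u where
  obj c := Σ x : h.obj c, F.obj (h.elementsMk c x)
  map f := ↾fun p => ⟨h.map f p.1, F.map (pushHom f p.1) p.2⟩
  map_id c := by
    ext p : 3
    fapply total_ext F
    · exact (ConcreteCategory.congr_hom (h.map_id c) p.1)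
    have := map_map_eq F (pushHom (𝟙 c) p.1) (idHom (by simp)) (𝟙 _) (𝟙 _)
      (by simp [pushHom, idHom]) p.2
    exact this.trans (by simp)
  map_comp {c d e} f g := by
    ext p : 3
    fapply total_ext F
    · exact (ConcreteCategory.congr_hom (h.map_comp f g) p.1)
    have := map_map_eq F (pushHom (f ≫ g) p.1) (idHom (y := h.map g (h.map f p.1)) (by simp))
      (pushHom f p.1) (pushHom g _) (by simp [pushHom, idHom]) p.2
    exact this

/-- The total space construction, as a functor to the slice over `h`. -/
def totalFunctor (h : C ⥤ Type u) : (h.Elements ⥤ Type u) ⥤ Over h where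
  obj F := Over.mk (Y := total F) { app := fun c => ↾fun p => p.1, naturality := fun _ _ _ => rfl }
  map {F G} α := Over.homMk
    { app := fun c => ↾fun p => ⟨p.1, α.app _ p.2⟩
      naturality := fun c d f => by
        ext p
        exact congrArg (Sigma.mk (β := fun x => G.obj (h.elementsMk d x)) (h.map f p.1))
          (NatTrans.naturality_apply α (pushHom f p.1) p.2) } rfl
  map_id F := rfl
  map_comp α β := rfl

theorem over_w_apply {X Y : Over h} (α : X ⟶ Y) (c : C) (a : X.left.obj c) :
    Y.hom.app c (α.left.app c a) = X.hom.app c a := by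
  rw [← Over.w α]; rfl

/-- The family of fibres `(c, x) ↦ {a : X c // p a = x}` of `p : X ⟶ h`. -/
def fiber (X : Over h) : h.Elements ⥤ Type u where
  obj p := {a : X.left.obj p.1 // X.hom.app p.1 a = p.2}
  map {p q} f := ↾fun a => ⟨X.left.map f.val a.1, by
    have := NatTrans.naturality_apply X.hom f.val a.1
    exact this.trans ((congrArg (h.map f.val) a.2).trans f.2)⟩
  map_id p := by
    ext a : 3
    apply Subtype.ext
    exact ConcreteCategory.congr_hom (X.left.map_id p.1) a.1
  map_comp f g := by
    ext a : 3
    apply Subtype.ext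
    exact ConcreteCategory.congr_hom (X.left.map_comp f.val g.val) a.1

/-- The fibre construction, as a functor from the slice over `h`. -/
def fiberFunctor (h : C ⥤ Type u) : Over h ⥤ (h.Elements ⥤ Type u) where
  obj X := fiber X
  map {X Y} α :=
    { app := fun p => ↾fun a => ⟨α.left.app p.1 a.1, (over_w_apply α p.1 a.1).trans a.2⟩
      naturality := fun p q f => by
        ext a
        apply Subtype.ext
        exact NatTrans.naturality_apply α.left f.val (Subtype.val a) }
  map_id X := rfl
  map_comp α β := rfl

/-- An element of `F (c, x)` is a point of the total space lying over `x`. -/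
def unitEquiv (F : h.Elements ⥤ Type u) (p : h.Elements) :
    F.obj p ≃ (fiber ((totalFunctor h).obj F)).obj p where
  toFun a := ⟨⟨p.2, a⟩, rfl⟩
  invFun b := F.map (idHom (c := p.1) b.2) b.1.2
  left_inv a := map_idHom_rfl F _ a
  right_inv b := Subtype.ext (total_ext F (c := p.1) b.2 rfl).symm

/-- Every family over the elements of `h` is the family of fibres of its total space. -/
def unitIso (h : C ⥤ Type u) :
    𝟭 (h.Elements ⥤ Type u) ≅ totalFunctor h ⋙ fiberFunctor h :=
  NatIso.ofComponents
    (fun F => NatIso.ofComponents (fun p => (unitEquiv F p).toIso) (fun {p q} f => by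
      obtain ⟨c, x⟩ := p
      obtain ⟨d, y⟩ := q
      obtain ⟨f, hf⟩ := f
      change c ⟶ d at f
      -- with `y` replaced by `h f x`, both sides agree definitionally
      obtain rfl : h.map f x = y := hf
      rfl))
    (fun α => rfl)

/-- The set `X c` is the disjoint union of the fibres of `X c → h c`. -/
def counitEquiv (X : Over h) (c : C) : (total (fiber X)).obj c ≃ X.left.obj c where
  toFun s := s.2.1
  invFun a := ⟨X.hom.app c a, ⟨a, rfl⟩⟩
  left_inv s := total_ext (fiber X) s.2.2
    (by
      apply Subtype.ext
      exact ConcreteCategory.congr_hom (X.left.map_id c) (Subtype.val (Sigma.snd s)))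
  right_inv a := rfl

/-- Every object over `h` is the total space of its family of fibres. -/
def counitIso (h : C ⥤ Type u) :
    fiberFunctor h ⋙ totalFunctor h ≅ 𝟭 (Over h) :=
  NatIso.ofComponents
    (fun X => Over.isoMk (NatIso.ofComponents (fun c => (counitEquiv X c).toIso) (fun f => rfl))
      (by
        ext c s
        exact s.2.2))
    (fun α => rfl)

end ElementsOver

/-- For a small category `C` and a functor `h : C ⥤ Type`, the
functor category from the category of elements of `h` to `Type` is equivalent
to the slice of `C ⥤ Type` over `h`. -/
theorem elements_functor_category_equiv_over {C : Type u} [SmallCategory C]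
    (h : C ⥤ Type u) :
    Nonempty ((h.Elements ⥤ Type u) ≌ Over h) := by
  exact ⟨CategoryTheory.Equivalence.mk (ElementsOver.totalFunctor h) (ElementsOver.fiberFunctor h)
    (ElementsOver.unitIso h) (ElementsOver.counitIso h)⟩
end

section
/- Define the sets of n-pasting diagrams by pd(0) = a one-element set and pd(n+1) = List(pd(n)), with boundary maps ∂ : pd(n+1) → pd(n) given by the constant map when n = 0 and by List.map ∂ when n ≥ 1. Define an n-stage tree to be a tuple of natural numbers τ(0), τ(1), …, τ(n) with τ(0) = 1 together with, for each 0 ≤ k < n, a monotone (order-preserving) map Fin τ(k+1) → Fin τ(k); let Bt(n) be the set of n-stage trees, with boundary ∂ : Bt(n+1) → Bt(n) given by truncation (forgetting τ(n+1) and the top map). Then there is a family of bijections α_n : pd(n) ≃ Bt(n), for all n ∈ ℕ, commuting with the boundary maps: α_n ∘ ∂ = ∂ ∘ α_{n+1} for every n. -/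
/-!
Both towers of boundary maps have the same local description. To a pasting diagram or a tree `x` of
dimension `n` attach its width, the number of nodes at height `n`. An `(n+1)`-dimensional object
with boundary `x` amounts to a choice of a number of children for each of these nodes, i.e. a tuple
`Fin (width x) → ℕ`, and its width is the sum of that tuple.

* For pasting diagrams (`exists_pdFiberEquiv`) this is an induction on the dimension and on the
  list: the fibre over `a :: l` is the product of the fibres over `a` and over `l`.
* For trees (`exists_bTreeEquiv`) an extension of `t` is a monotone map `Fin m → Fin k`, with `k`
  the width of `t`, and such maps, for varying `m`, are sorted lists, i.e. multisets in `Fin k`,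
  i.e. multiplicity functions `Fin k → ℕ` of total `m`.

Hence a width-preserving bijection `pd n ≃ BTree n` lifts to a width-preserving bijection
`pd (n + 1) ≃ BTree (n + 1)` over it (`exists_lift`), and recursion on `n` gives the family.
-/

/-- The set of `n`-pasting diagrams: `pd 0` is a one-element set and
`pd (n+1) = List (pd n)`. -/
def pd : ℕ → Type
  | 0 => PUnit
  | n + 1 => List (pd n)

/-- The boundary map `∂ : pd (n+1) → pd n`: the constant map when `n = 0`,
and `List.map ∂` when `n ≥ 1`. -/
def pdBdry : (n : ℕ) → pd (n + 1) → pd n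
  | 0, _ => PUnit.unit
  | n + 1, l => List.map (pdBdry n) l

/-- An `n`-stage tree: natural numbers `τ 0, …, τ n` with `τ 0 = 1`, together
with a monotone map `Fin (τ (k+1)) → Fin (τ k)` for each `0 ≤ k < n`. -/
structure BTree (n : ℕ) where
  τ : Fin (n + 1) → ℕ
  τ_zero : τ 0 = 1
  map : ∀ k : Fin n, Fin (τ k.succ) → Fin (τ k.castSucc)
  mono : ∀ k : Fin n, Monotone (map k)

/-- The boundary map `∂ : Bt (n+1) → Bt n`, truncating an `(n+1)`-stage tree
to an `n`-stage tree (forgetting the top stage). -/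
def btBdry (n : ℕ) (t : BTree (n + 1)) : BTree n where
  τ := fun k => t.τ k.castSucc
  τ_zero := by simpa using t.τ_zero
  map := fun k x =>
    t.map k.castSucc (Fin.cast (congrArg t.τ (Fin.succ_castSucc k).symm) x)
  mono := fun k a b hab => t.mono k.castSucc (by simpa using hab)

/-- The width of an `n`-pasting diagram: its number of nodes at the maximal height `n`. -/
def pdWidth : (n : ℕ) → pd n → ℕ
  | 0, _ => 1
  | n + 1, l => (List.map (pdWidth n) l).sum

/-- Fibres of `List.map f` over a cons decompose as products. -/
def mapFiberCons {A B : Type} (f : A → B) (b : B) (l : List B) :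
    {y : List A // y.map f = b :: l} ≃ {a : A // f a = b} × {y : List A // y.map f = l} where
  toFun
    | ⟨[], h⟩ => by simp at h
    | ⟨a :: y, h⟩ => (⟨a, (List.cons.inj h).1⟩, ⟨y, (List.cons.inj h).2⟩)
  invFun p := ⟨p.1.1 :: p.2.1, by rw [List.map_cons, p.1.2, p.2.2]⟩
  left_inv := by
    rintro ⟨_ | ⟨a, y⟩, h⟩
    · simp at h
    · rfl
  right_inv _ := rfl

/-- A pasting diagram with boundary `x` is a choice of a number of children for each top node of
`x`. -/
theorem exists_pdFiberEquiv (n : ℕ) (x : pd n) :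
    ∃ e : {y : pd (n + 1) // pdBdry n y = x} ≃ (Fin (pdWidth n x) → ℕ),
      ∀ y, pdWidth (n + 1) y.1 = ∑ i, e y i := by
  induction n with
  | zero =>
    let e₁ : {y : pd 1 // pdBdry 0 y = x} ≃ List PUnit.{1} := Equiv.subtypeUnivEquiv fun _ => rfl
    let e₂ : ℕ ≃ (Fin 1 → ℕ) := (Equiv.funUnique (Fin 1) ℕ).symm
    refine ⟨(e₁.trans (Equiv.listUniqueEquiv PUnit)).trans e₂, ?_⟩
    rintro ⟨y, hy⟩
    have hsum : ∀ z : List PUnit.{1}, (z.map fun _ => 1).sum = z.length := fun z => by simp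
    have h : pdWidth 1 y = List.length y := hsum y
    rw [h]
    exact (Fin.sum_univ_one fun _ => List.length y).symm
  | succ n ih =>
    change List (pd n) at x
    induction x with
    | nil =>
      have : Unique {y : pd (n + 2) // pdBdry (n + 1) y = ([] : List (pd n))} :=
        { default := ⟨([] : List (pd (n + 1))), rfl⟩
          uniq := fun y => Subtype.ext (List.map_eq_nil_iff.1 y.2) }
      have : Unique (Fin (pdWidth (n + 1) ([] : List (pd n))) → ℕ) :=
        inferInstanceAs (Unique (Fin 0 → ℕ))
      refine ⟨Equiv.ofUnique _ _, ?_⟩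
      rintro ⟨y, hy⟩
      obtain rfl : y = ([] : List (pd (n + 1))) := List.map_eq_nil_iff.1 hy
      rfl
    | cons a l ihl =>
      obtain ⟨e₁, h₁⟩ := ih a
      obtain ⟨e₂, h₂⟩ := ihl
      have hw : pdWidth n a + pdWidth (n + 1) l = pdWidth (n + 1) (a :: l : List (pd n)) := by
        simp [pdWidth]
      let e₀ : {y : pd (n + 2) // pdBdry (n + 1) y = (a :: l : List (pd n))} ≃
          {y : pd (n + 1) // pdBdry n y = a} × {y : pd (n + 2) // pdBdry (n + 1) y = l} :=
        mapFiberCons (pdBdry n) a l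
      refine ⟨((e₀.trans (e₁.prodCongr e₂)).trans (Fin.appendEquiv _ _)).trans
        ((finCongr hw).arrowCongr (Equiv.refl ℕ)), ?_⟩
      intro y
      obtain ⟨⟨⟨b, hb⟩, ⟨z, hz⟩⟩, rfl⟩ := e₀.symm.surjective y
      have hy : pdWidth (n + 2) (e₀.symm (⟨b, hb⟩, ⟨z, hz⟩)).1
          = pdWidth (n + 1) b + pdWidth (n + 2) z :=
        List.sum_cons
      rw [hy, h₁ ⟨b, hb⟩, h₂ ⟨z, hz⟩]
      rw [← (finCongr hw).sum_comp]
      simp [Fin.sum_univ_add, Fin.appendEquiv]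

theorem exists_pdEquiv (n : ℕ) :
    ∃ e : pd (n + 1) ≃ Σ x : pd n, (Fin (pdWidth n x) → ℕ),
      ∀ y, (e y).1 = pdBdry n y ∧ pdWidth (n + 1) y = ∑ i, (e y).2 i := by
  choose e he using exists_pdFiberEquiv n
  exact ⟨(Equiv.sigmaFiberEquiv (pdBdry n)).symm.trans (Equiv.sigmaCongrRight e),
    fun y => ⟨rfl, he _ ⟨y, rfl⟩⟩⟩

/-- Monotone maps into `Fin k` from some `Fin m`, the length `m` being part of the data. -/
abbrev MonoTuple (k : ℕ) : Type := Σ m : ℕ, {f : Fin m → Fin k // Monotone f}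

/-- A monotone map into `Fin k` is determined by its fibre cardinalities, which are arbitrary. -/
theorem exists_monoTupleEquiv (k : ℕ) :
    ∃ e : MonoTuple k ≃ (Fin k → ℕ), ∀ p, p.1 = ∑ i, e p i := by
  let F : MonoTuple k → Multiset (Fin k) := fun p => (List.ofFn p.2.1 : List (Fin k))
  have hF : Function.Bijective F := by
    constructor
    · rintro ⟨m, f, hf⟩ ⟨m', f', hf'⟩ h
      have hl := (Multiset.coe_eq_coe.1 h).eq_of_sortedLE hf.sortedLE_ofFn hf'.sortedLE_ofFn
      have hs := List.ofFn_inj'.1 hl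
      cases hs
      rfl
    · intro s
      refine ⟨⟨_, (s.sort (· ≤ ·)).get, (s.pairwise_sort (· ≤ ·)).sortedLE.monotone_get⟩, ?_⟩
      change ((List.ofFn (s.sort (· ≤ ·)).get : List (Fin k)) : Multiset (Fin k)) = s
      rw [List.ofFn_get, Multiset.sort_eq]
  refine ⟨((Equiv.ofBijective F hF).trans Multiset.toFinsupp.toEquiv).trans
    Finsupp.equivFunOnFinite, fun p => ?_⟩
  change p.1 = ∑ i, (F p).count i
  rw [Multiset.sum_count_eq_card (fun a _ => Finset.mem_univ a)]
  simp [F]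

theorem bTree_ext {n : ℕ} {s t : BTree n} (h : ∀ k, s.τ k = t.τ k)
    (hm : ∀ k x y, x.val = y.val → (s.map k x).val = (t.map k y).val) : s = t := by
  obtain ⟨τ, h0, f, hf⟩ := s
  obtain ⟨τ', h0', f', hf'⟩ := t
  obtain rfl : τ = τ' := funext h
  obtain rfl : f = f' := by
    funext k x
    exact Fin.ext (hm k x x rfl)
  rfl

theorem bTree_map_congr {n : ℕ} {s t : BTree n} (h : s = t) (k : Fin n)
    (x : Fin (s.τ k.succ)) (y : Fin (t.τ k.succ)) (hxy : x.val = y.val) :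
    (s.map k x).val = (t.map k y).val := by
  subst h
  rw [Fin.ext hxy]

/-- Split an `(n+1)`-stage tree into its truncation and its top map. -/
def splitTop (n : ℕ) (s : BTree (n + 1)) : Σ t : BTree n, MonoTuple (t.τ (Fin.last n)) :=
  ⟨btBdry n s, s.τ (Fin.last (n + 1)), s.map (Fin.last n), s.mono (Fin.last n)⟩

theorem splitTop_congr {n : ℕ} {p q : Σ t : BTree n, MonoTuple (t.τ (Fin.last n))} (h : p = q)
    (x : Fin p.2.1) (y : Fin q.2.1) (hxy : x.val = y.val) :
    (p.2.2.1 x).val = (q.2.2.1 y).val := by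
  subst h
  rw [Fin.ext hxy]

theorem splitTop_bijective (n : ℕ) : Function.Bijective (splitTop n) := by
  constructor
  · intro s s' h
    have hb : btBdry n s = btBdry n s' := congrArg Sigma.fst h
    refine bTree_ext (fun k => ?_) (fun k => ?_)
    · induction k using Fin.lastCases with
      | last => exact congrArg (fun p => p.2.1) h
      | cast k => exact congrArg (fun t => t.τ k) hb
    · induction k using Fin.lastCases with
      | last => exact splitTop_congr h
      | cast k => exact bTree_map_congr hb k
  · rintro ⟨⟨τ, h0, f, hf⟩, m, g, hg⟩
    -- Replacing `τ` by the restriction of a function on `Fin (n + 2)` avoids all transports.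
    obtain ⟨σ, rfl, rfl⟩ : ∃ σ : Fin (n + 2) → ℕ,
        (fun k : Fin (n + 1) => σ k.castSucc) = τ ∧ σ (Fin.last (n + 1)) = m :=
      ⟨Fin.snoc (α := fun _ => ℕ) τ m, by funext k; simp, by simp⟩
    let F : ∀ k : Fin (n + 1), {u : Fin (σ k.succ) → Fin (σ k.castSucc) // Monotone u} :=
      Fin.lastCases (motive := fun k => {u : Fin (σ k.succ) → Fin (σ k.castSucc) // Monotone u})
        ⟨g, hg⟩ (fun k => ⟨f k, hf k⟩)
    have hlast : F (Fin.last n) = ⟨g, hg⟩ := Fin.lastCases_last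
    have hcast : ∀ k : Fin n, F k.castSucc = ⟨f k, hf k⟩ := fun k => Fin.lastCases_castSucc k
    refine ⟨⟨σ, h0, fun k => (F k).1, fun k => (F k).2⟩, ?_⟩
    have hb : btBdry n ⟨σ, h0, fun k => (F k).1, fun k => (F k).2⟩
        = ⟨fun k => σ k.castSucc, h0, f, hf⟩ := by
      refine bTree_ext (fun k => rfl) (fun k x y hxy => ?_)
      obtain rfl : x = y := Fin.ext hxy
      change ((F k.castSucc).1 x).val = _
      rw [hcast]
    refine Sigma.ext hb ?_
    have hG : ∀ G : {u : Fin (σ (Fin.last n).succ) → Fin (σ (Fin.last n).castSucc) // Monotone u},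
        G = ⟨g, hg⟩ →
        (⟨σ (Fin.last (n + 1)), G⟩ : MonoTuple (σ (Fin.last n).castSucc))
          = ⟨σ (Fin.last (n + 1)), g, hg⟩ := by
      rintro _ rfl
      rfl
    exact heq_of_eq (hG _ hlast)

/-- An extension of an `n`-stage tree `t` by one stage is a choice of a number of children for each
top node of `t`. -/
theorem exists_bTreeEquiv (n : ℕ) :
    ∃ e : BTree (n + 1) ≃ Σ t : BTree n, (Fin (t.τ (Fin.last n)) → ℕ),
      ∀ s, (e s).1 = btBdry n s ∧ s.τ (Fin.last (n + 1)) = ∑ i, (e s).2 i := by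
  choose e he using exists_monoTupleEquiv
  exact ⟨(Equiv.ofBijective _ (splitTop_bijective n)).trans
    (Equiv.sigmaCongrRight fun t => e (t.τ (Fin.last n))),
    fun s => ⟨rfl, he _ (splitTop n s).2⟩⟩

/-- Bijections `pd n ≃ BTree n` carrying the width to the number of top nodes. -/
abbrev WidthEquiv (n : ℕ) : Type :=
  {α : pd n ≃ BTree n // ∀ x, pdWidth n x = (α x).τ (Fin.last n)}

/-- A width-preserving bijection lifts along the boundary maps. -/
theorem exists_lift (n : ℕ) (α : WidthEquiv n) :
    ∃ β : WidthEquiv (n + 1), ∀ x, α.1 (pdBdry n x) = btBdry n (β.1 x) := by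
  obtain ⟨α, hα⟩ := α
  obtain ⟨e, he⟩ := exists_pdEquiv n
  obtain ⟨e', he'⟩ := exists_bTreeEquiv n
  let m : (Σ x : pd n, (Fin (pdWidth n x) → ℕ)) ≃ Σ t : BTree n, (Fin (t.τ (Fin.last n)) → ℕ) :=
    Equiv.sigmaCongr α fun x => (finCongr (hα x)).arrowCongr (Equiv.refl ℕ)
  have hm : ∀ p, ∑ i, (m p).2 i = ∑ i, p.2 i := by
    rintro ⟨x, c⟩
    exact (finCongr (hα x)).symm.sum_comp c
  have hm₁ : ∀ p, (m p).1 = α p.1 := fun _ => rfl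
  refine ⟨⟨(e.trans m).trans e'.symm, fun y => ?_⟩, fun y => ?_⟩
  · rw [(he' _).2, (he y).2]
    have hy : e' (((e.trans m).trans e'.symm) y) = m (e y) := e'.apply_symm_apply _
    rw [hy, hm]
  · rw [← (he' _).1, ← (he y).1]
    simp [hm₁]

theorem exists_widthEquiv_zero : Nonempty (WidthEquiv 0) := by
  let t₀ : BTree 0 := ⟨fun _ => 1, rfl, fun k => k.elim0, fun k => k.elim0⟩
  have ht : ∀ t : BTree 0, t = t₀ := fun t =>
    bTree_ext (fun k => by rw [Fin.fin_one_eq_zero k]; exact t.τ_zero) (fun k => k.elim0)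
  refine ⟨⟨⟨fun _ => t₀, fun _ => PUnit.unit, fun _ => rfl, fun t => (ht t).symm⟩, fun _ => rfl⟩⟩

/-- There is a family of bijections `α n : pd n ≃ BTree n`
between `n`-pasting diagrams and `n`-stage (Batanin) trees, commuting with
the boundary maps: `α n ∘ ∂ = ∂ ∘ α (n+1)`. -/
theorem pd_equiv_btree :
    ∃ α : ∀ n : ℕ, pd n ≃ BTree n,
      ∀ (n : ℕ) (x : pd (n + 1)), α n (pdBdry n x) = btBdry n (α (n + 1) x) := by
  obtain ⟨α₀⟩ := exists_widthEquiv_zero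
  choose next hnext using exists_lift
  let α : ∀ n, WidthEquiv n := fun n => Nat.rec α₀ next n
  exact ⟨fun n => (α n).1, fun n => hnext n (α n)⟩
end
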